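/- arXiv:1103.3693 — 2 statements merged into one kernel-verified Lean document; each statement's English description precedes it below -/
import Mathlib

section
/- For every generalised clause-set F: (1) F is satisfiable if and only if its direct translation Γ(F) is satisfiable; (2) F is minimally unsatisfiable if and only if Γ(F) is minimally unsatisfiable; (3) F is lean if and only if Γ(F) is lean. -/
set_option linter.unusedSectionVars false
set_option linter.unusedVariables false

open scoped Classical

namespace GCLS

variable {V α : Type} [DecidableEq V] [DecidableEq α]

/-- A finite "functional" set of (variable, value) pairs, with values inside the
given domains `D`; used both for clauses and for partial assignments. -/
def FinFn (D : V → Finset α) : Type :=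
  { s : Finset (V × α) // (∀ p ∈ s, p.2 ∈ D p.1) ∧
      ∀ p ∈ s, ∀ q ∈ s, p.1 = q.1 → p = q }

variable {D : V → Finset α}

instance : DecidableEq (FinFn D) :=
  fun a b => decidable_of_iff (a.1 = b.1) Subtype.ext_iff.symm

namespace FinFn

/-- The set of variables occurring. -/
def vars (s : FinFn D) : Finset V := s.1.image Prod.fst

/-- Restriction to the pairs whose variable lies in `W`. -/
def restrictVars (s : FinFn D) (W : Finset V) : FinFn D :=
  ⟨s.1.filter (fun p => p.1 ∈ W),
   fun p hp => s.2.1 p (Finset.mem_filter.mp hp).1,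
   fun p hp q hq h =>
     s.2.2 p (Finset.mem_filter.mp hp).1 q (Finset.mem_filter.mp hq).1 h⟩

/-- Removal of a set of pairs. -/
def sdiff (s : FinFn D) (t : Finset (V × α)) : FinFn D :=
  ⟨s.1 \ t,
   fun p hp => s.2.1 p (Finset.mem_sdiff.mp hp).1,
   fun p hp q hq h =>
     s.2.2 p (Finset.mem_sdiff.mp hp).1 q (Finset.mem_sdiff.mp hq).1 h⟩

end FinFn

/-- Clauses: finite sets of literals `(v,ε)` (meaning "v ≠ ε"), at most one literal
per variable, values inside the domains. -/
abbrev Clause (D : V → Finset α) := FinFn D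

/-- Partial assignments: finitely many variables get values inside their domains. -/
abbrev PAssign (D : V → Finset α) := FinFn D

/-- `φ` satisfies the literal `(v,ε)` (i.e. "v ≠ ε"): `v` is assigned a value ≠ `ε`. -/
def SatLit (φ : PAssign D) (l : V × α) : Prop :=
  ∃ ε, (l.1, ε) ∈ φ.1 ∧ ε ≠ l.2

/-- `φ` satisfies a clause iff it satisfies some literal of it. -/
def SatClause (φ : PAssign D) (C : Clause D) : Prop :=
  ∃ l ∈ C.1, SatLit φ l

/-- The clause obtained from `C` by deleting all literals falsified by `φ`. -/
def Clause.restrict (φ : PAssign D) (C : Clause D) : Clause D :=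
  FinFn.sdiff C φ.1

/-- The operation `φ * F` on multi-clause-sets: remove all clauses satisfied by `φ`
and delete all falsified literals from the remaining clauses. -/
noncomputable def applyM (φ : PAssign D) (F : Multiset (Clause D)) : Multiset (Clause D) :=
  (F.filter (fun C => ¬ SatClause φ C)).map (Clause.restrict φ)

/-- The operation `φ * F` on clause-sets (with contraction of equal clauses). -/
noncomputable def applyF (φ : PAssign D) (F : Finset (Clause D)) : Finset (Clause D) :=
  (F.filter (fun C => ¬ SatClause φ C)).image (Clause.restrict φ)

/-- Satisfiability: some partial assignment satisfies all clauses. -/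
def Sat (F : Multiset (Clause D)) : Prop :=
  ∃ φ : PAssign D, applyM φ F = 0

/-- Minimal unsatisfiability of a clause-set. -/
def MinUnsat (F : Finset (Clause D)) : Prop :=
  ¬ Sat F.val ∧ ∀ F' ⊂ F, Sat F'.val

/-- The variables of a multi-clause-set. -/
def mvars (F : Multiset (Clause D)) : Finset V := F.toFinset.sup FinFn.vars

/-- The deficiency `δ(F) = c(F) - Σ_{v ∈ var(F)} (|D_v| - 1)`. -/
def delta (F : Multiset (Clause D)) : ℤ :=
  (Multiset.card F : ℤ) - ∑ v ∈ mvars F, ((D v).card - 1 : ℤ)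

lemma powerset_toFinset_nonempty (F : Multiset (Clause D)) :
    F.powerset.toFinset.Nonempty :=
  ⟨0, by simp⟩

/-- The maximal deficiency `δ*(F) = max {δ(F') : F' ≤ F}`. -/
noncomputable def deltaStar (F : Multiset (Clause D)) : ℤ :=
  F.powerset.toFinset.sup' (powerset_toFinset_nonempty F) delta

/-- A tight sub-multi-clause-set: `F' ≤ F` with `δ(F') = δ*(F)`. -/
noncomputable def Tight (F F' : Multiset (Clause D)) : Prop :=
  F' ≤ F ∧ delta F' = deltaStar F

/-- `F` is matching satisfiable: the clause-variable graph `B(F)` has a matching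
covering all clause-nodes.  Such a matching is encoded as a multiset `P` of pairs
(clause-occurrence, variable-node), where the variable-nodes `(v,k)`,
`k < |D v| - 1`, are the copies of the variable `v`; the matching covers each
clause-occurrence exactly once (`P.map Prod.fst = F`), uses pairwise distinct
variable-nodes, and respects adjacency in `B(F)`. -/
def MatchingSat (F : Multiset (Clause D)) : Prop :=
  ∃ P : Multiset (Clause D × (V × ℕ)),
    P.map Prod.fst = F ∧ (P.map Prod.snd).Nodup ∧
    ∀ p ∈ P, p.2.1 ∈ FinFn.vars p.1 ∧ p.2.2 < (D p.2.1).card - 1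

/-- The edge between clause `C` and the copies of variable `v` is retained in
`B_φ(F)`: the literal of `C` with variable `v` is satisfied by `φ`. -/
def EdgeSat (φ : PAssign D) (C : Clause D) (v : V) : Prop :=
  ∃ ε, (v, ε) ∈ C.1 ∧ SatLit φ (v, ε)

/-- `φ` is matching-satisfying for `F`: `B_φ(F)` has a matching covering all
clause-nodes. -/
def MatchingSatisfying (φ : PAssign D) (F : Multiset (Clause D)) : Prop :=
  ∃ P : Multiset (Clause D × (V × ℕ)),
    P.map Prod.fst = F ∧ (P.map Prod.snd).Nodup ∧
    ∀ p ∈ P, p.2.2 < (D p.2.1).card - 1 ∧ EdgeSat φ p.1 p.2.1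

/-- The maximum size of a matching in `B(F)`. -/
noncomputable def nu (F : Multiset (Clause D)) : ℕ :=
  sSup { k | ∃ P : Multiset (Clause D × (V × ℕ)),
    P.map Prod.fst ≤ F ∧ (P.map Prod.snd).Nodup ∧
    (∀ p ∈ P, p.2.1 ∈ FinFn.vars p.1 ∧ p.2.2 < (D p.2.1).card - 1) ∧
    Multiset.card P = k }

/-- The maximum size of a matching in `B_φ(F)`. -/
noncomputable def nuSub (φ : PAssign D) (F : Multiset (Clause D)) : ℕ :=
  sSup { k | ∃ P : Multiset (Clause D × (V × ℕ)),
    P.map Prod.fst ≤ F ∧ (P.map Prod.snd).Nodup ∧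
    (∀ p ∈ P, p.2.2 < (D p.2.1).card - 1 ∧ EdgeSat φ p.1 p.2.1) ∧
    Multiset.card P = k }

/-- `φ` is matching-maximum for `F`. -/
noncomputable def MatchingMaximum (φ : PAssign D) (F : Multiset (Clause D)) : Prop :=
  nuSub φ F = nu F

/-- `φ` is an autarky for `F`: every clause touched by `φ` is satisfied by `φ`. -/
def IsAutarky (φ : PAssign D) (F : Multiset (Clause D)) : Prop :=
  ∀ C ∈ F, (FinFn.vars C ∩ FinFn.vars φ).Nonempty → SatClause φ C

/-- `F` is lean: it has no non-trivial autarky. -/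
def IsLean (F : Multiset (Clause D)) : Prop :=
  ¬ ∃ φ : PAssign D, IsAutarky φ F ∧ (FinFn.vars φ ∩ mvars F).Nonempty

/-- The sub-multi-clause-set of clauses touched by the variables in `W`. -/
noncomputable def touchedBy (F : Multiset (Clause D)) (W : Finset V) : Multiset (Clause D) :=
  F.filter (fun C => (FinFn.vars C ∩ W).Nonempty)

/-- The restriction `F[W]`: keep the clauses touching `W` and delete from them all
literals whose variable is not in `W`. -/
noncomputable def restrictTo (F : Multiset (Clause D)) (W : Finset V) : Multiset (Clause D) :=
  (touchedBy F W).map (fun C => FinFn.restrictVars C W)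

/-- `φ` is a matching autarky for `F`: `φ` is matching-satisfying for the
sub-multi-clause-set of clauses touched by `φ`. -/
noncomputable def IsMatchingAutarky (φ : PAssign D) (F : Multiset (Clause D)) : Prop :=
  MatchingSatisfying φ (touchedBy F (FinFn.vars φ))

/-- `F` is matching lean: no non-trivial matching autarky. -/
noncomputable def MatchingLean (F : Multiset (Clause D)) : Prop :=
  ¬ ∃ φ : PAssign D, IsMatchingAutarky φ F ∧ (FinFn.vars φ ∩ mvars F).Nonempty

lemma surp_nonempty {F : Multiset (Clause D)} (h : (mvars F).Nonempty) :
    ((mvars F).powerset.erase ∅).Nonempty := by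
  obtain ⟨v, hv⟩ := h
  refine ⟨{v}, ?_⟩
  simp [Finset.mem_erase, Finset.singleton_subset_iff, hv]

/-- The surplus `surp(F) = min {δ(F[W]) : ∅ ≠ W ⊆ var(F)}` (and `0` if `var(F) = ∅`). -/
noncomputable def surp (F : Multiset (Clause D)) : ℤ :=
  if h : (mvars F).Nonempty then
    ((mvars F).powerset.erase ∅).inf' (surp_nonempty h)
      (fun W => delta (restrictTo F W))
  else 0

/-- The number of occurrences of the literal `l` in `F`. -/
noncomputable def litCount (F : Multiset (Clause D)) (l : V × α) : ℕ :=
  Multiset.card (F.filter (fun C => l ∈ C.1))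

/-- The number of occurrences `#_v(F)` of the variable `v` in `F`. -/
noncomputable def varCount (F : Multiset (Clause D)) (v : V) : ℕ :=
  ∑ ε ∈ D v, litCount F (v, ε)

/-- The partial assignment `⟨v → ε⟩`. -/
def single (v : V) (ε : α) (hε : ε ∈ D v) : PAssign D :=
  ⟨{(v, ε)}, by
    refine ⟨?_, ?_⟩
    · intro p hp
      rw [Finset.mem_singleton] at hp
      subst hp; exact hε
    · intro p hp q hq _
      rw [Finset.mem_singleton] at hp hq
      subst hp; subst hq; rfl⟩

/-- Composition `φ ∘ ψ` of partial assignments: domain is the union of the domains,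
`ψ` taking precedence. -/
def comp (φ ψ : PAssign D) : PAssign D :=
  ⟨ψ.1 ∪ φ.1.filter (fun p => p.1 ∉ FinFn.vars ψ), by
    constructor
    · intro p hp
      rcases Finset.mem_union.mp hp with h | h
      · exact ψ.2.1 p h
      · exact φ.2.1 p (Finset.mem_filter.mp h).1
    · intro p hp q hq hpq
      rcases Finset.mem_union.mp hp with h1 | h1 <;>
        rcases Finset.mem_union.mp hq with h2 | h2
      · exact ψ.2.2 p h1 q h2 hpq
      · exact absurd (hpq ▸ Finset.mem_image_of_mem Prod.fst h1)
          (Finset.mem_filter.mp h2).2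
      · exact absurd (hpq.symm ▸ Finset.mem_image_of_mem Prod.fst h2)
          (Finset.mem_filter.mp h1).2
      · exact φ.2.2 p (Finset.mem_filter.mp h1).1 q (Finset.mem_filter.mp h2).1 hpq⟩

/-- Two clauses clash (in some variable). -/
def Clash (C C' : Clause D) : Prop :=
  ∃ v ε ε', (v, ε) ∈ C.1 ∧ (v, ε') ∈ C'.1 ∧ ε ≠ ε'

/-- The number of variables in which two clauses clash. -/
noncomputable def clashCount (C C' : Clause D) : ℕ :=
  ((FinFn.vars C).filter
    (fun v => ∃ ε ε', (v, ε) ∈ C.1 ∧ (v, ε') ∈ C'.1 ∧ ε ≠ ε')).card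

/-- Hitting clause-sets: every two distinct clauses clash. -/
def Hitting (F : Finset (Clause D)) : Prop :=
  ∀ C ∈ F, ∀ C' ∈ F, C ≠ C' → Clash C C'

/-- Boolean clauses over the boolean variables `V × α` (one boolean variable per
generalised literal; the value `false` gives the positive boolean literal). -/
abbrev BClause (V α : Type) :=
  Clause (fun _ : V × α => (Finset.univ : Finset Bool))

/-- The direct translation of a single clause: each literal `(v,ε)` is replaced by
the positive boolean literal of the boolean variable `(v,ε)`. -/
def dirClause (C : Clause D) : BClause V α :=
  ⟨C.1.image (fun p => (p, false)), by
    constructor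
    · intro p _; exact Finset.mem_univ _
    · intro p hp q hq h
      simp only [Finset.mem_image] at hp hq
      obtain ⟨a, -, rfl⟩ := hp
      obtain ⟨b, -, rfl⟩ := hq
      exact congrArg (fun x => (x, false)) h⟩

/-- The ALO-clause for a variable `v`: the negative boolean literals of the boolean
variables `(v,ε)` for `ε ∈ D v`. -/
def aloClause (D : V → Finset α) (v : V) : BClause V α :=
  ⟨(D v).image (fun ε => ((v, ε), true)), by
    constructor
    · intro p _; exact Finset.mem_univ _
    · intro p hp q hq h
      simp only [Finset.mem_image] at hp hq
      obtain ⟨a, -, rfl⟩ := hp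
      obtain ⟨b, -, rfl⟩ := hq
      exact congrArg (fun x => (x, true)) h⟩

/-- The direct translation `Γ(F)`: the translated clauses together with the
ALO-clauses for all occurring variables. -/
noncomputable def dirTrans (F : Finset (Clause D)) : Finset (BClause V α) :=
  F.image dirClause ∪ (mvars F.val).image (aloClause D)

lemma mem_mvars' {F : Finset (Clause D)} {v : V} :
    v ∈ mvars F.val ↔ ∃ C ∈ F, ∃ l ∈ C.1, l.1 = v := by
  simp only [mvars, Finset.mem_sup, FinFn.vars, Finset.mem_image, Multiset.mem_toFinset,
    Finset.mem_val]

/-- The partial assignment given by a total function on a finite set. -/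
def mkFn (W : Finset V) (f : V → α) (hf : ∀ v, f v ∈ D v) : PAssign D :=
  ⟨W.image (fun v => (v, f v)), by
    constructor
    · intro p hp
      obtain ⟨v, -, rfl⟩ := Finset.mem_image.mp hp
      exact hf v
    · intro p hp q hq h
      obtain ⟨v, -, rfl⟩ := Finset.mem_image.mp hp
      obtain ⟨w, -, rfl⟩ := Finset.mem_image.mp hq
      have h' : v = w := h
      rw [h']⟩

lemma mem_mkFn {W : Finset V} {f : V → α} {hf : ∀ v, f v ∈ D v} {v : V} {e : α} :
    (v, e) ∈ (mkFn W f hf : PAssign D).1 ↔ v ∈ W ∧ e = f v := by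
  simp only [mkFn, Finset.mem_image, Prod.mk.injEq]
  constructor
  · rintro ⟨a, ha, rfl, rfl⟩; exact ⟨ha, rfl⟩
  · rintro ⟨h, rfl⟩; exact ⟨v, h, rfl, rfl⟩

lemma mem_vars' {φ : FinFn D} {v : V} : v ∈ FinFn.vars φ ↔ ∃ e, (v, e) ∈ φ.1 := by
  simp [FinFn.vars]

lemma exists_total (hD : ∀ v, (D v).Nonempty) (φ : PAssign D) :
    ∃ f : V → α, (∀ v, f v ∈ D v) ∧ ∀ v e, (v, e) ∈ φ.1 → e = f v := by
  refine ⟨fun v => if h : ∃ e, (v, e) ∈ φ.1 then h.choose else (hD v).choose, ?_, ?_⟩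
  · intro v
    by_cases h : ∃ e, (v, e) ∈ φ.1
    · simp only [h, dif_pos]
      exact φ.2.1 _ h.choose_spec
    · simp only [h, dif_neg, not_false_eq_true]
      exact (hD v).choose_spec
  · intro v e he
    have h : ∃ e, (v, e) ∈ φ.1 := ⟨e, he⟩
    simp only [h, dif_pos]
    have := φ.2.2 _ he _ h.choose_spec rfl
    exact congrArg Prod.snd this

lemma sat_iff (hD : ∀ v, (D v).Nonempty) (F : Finset (Clause D)) :
    Sat F.val ↔ ∃ f : V → α, (∀ v, f v ∈ D v) ∧ ∀ C ∈ F, ∃ l ∈ C.1, f l.1 ≠ l.2 := by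
  have key : ∀ φ : PAssign D, applyM φ F.val = 0 ↔ ∀ C ∈ F, SatClause φ C := by
    intro φ
    simp [applyM, Multiset.filter_eq_nil]
  unfold Sat
  simp only [key]
  constructor
  · rintro ⟨φ, h⟩
    obtain ⟨f, hf, hφ⟩ := exists_total hD φ
    refine ⟨f, hf, fun C hC => ?_⟩
    obtain ⟨l, hl, e, he, hne⟩ := h C hC
    exact ⟨l, hl, (hφ _ _ he) ▸ hne⟩
  · rintro ⟨f, hf, h⟩
    refine ⟨mkFn (mvars F.val) f hf, fun C hC => ?_⟩
    obtain ⟨l, hl, hne⟩ := h C hC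
    exact ⟨l, hl, f l.1, mem_mkFn.2 ⟨mem_mvars'.2 ⟨C, hC, l, hl, rfl⟩, rfl⟩, hne⟩

lemma lean_iff (hD : ∀ v, (D v).Nonempty) (F : Finset (Clause D)) :
    IsLean F.val ↔ ¬ ∃ (P : V → Prop) (f : V → α), (∀ v, f v ∈ D v) ∧
      (∀ C ∈ F, ∀ l ∈ C.1, P l.1 → ∃ l ∈ C.1, P l.1 ∧ f l.1 ≠ l.2) ∧
      ∃ C ∈ F, ∃ l ∈ C.1, P l.1 := by
  unfold IsLean
  rw [not_iff_not]
  constructor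
  · rintro ⟨φ, hA, v, hv⟩
    obtain ⟨f, hf, hφ⟩ := exists_total hD φ
    rw [Finset.mem_inter, mem_mvars'] at hv
    obtain ⟨hv, C, hC, l, hl, rfl⟩ := hv
    refine ⟨fun v => v ∈ FinFn.vars φ, f, hf, ?_, C, hC, l, hl, hv⟩
    intro C hC l hl hP
    obtain ⟨l', hl', e, he, hne⟩ := hA C hC
      ⟨l.1, Finset.mem_inter.2 ⟨mem_vars'.2 ⟨l.2, hl⟩, hP⟩⟩
    exact ⟨l', hl', mem_vars'.2 ⟨e, he⟩, (hφ _ _ he) ▸ hne⟩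
  · rintro ⟨P, f, hf, hA, C, hC, l, hl, hP⟩
    refine ⟨mkFn ((mvars F.val).filter P) f hf, ?_, l.1, ?_⟩
    · rintro C hC ⟨v, hv⟩
      rw [Finset.mem_inter, mem_vars', mem_vars'] at hv
      obtain ⟨⟨e, he⟩, e', he'⟩ := hv
      rw [mem_mkFn, Finset.mem_filter] at he'
      obtain ⟨l', hl', hP', hne⟩ := hA C hC _ he he'.1.2
      exact ⟨l', hl', f l'.1, mem_mkFn.2 ⟨Finset.mem_filter.2
        ⟨mem_mvars'.2 ⟨C, hC, l', hl', rfl⟩, hP'⟩, rfl⟩, hne⟩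
    · have h1 : l.1 ∈ mvars F.val := mem_mvars'.2 ⟨C, hC, l, hl, rfl⟩
      exact Finset.mem_inter.2 ⟨mem_vars'.2 ⟨f l.1, mem_mkFn.2
        ⟨Finset.mem_filter.2 ⟨h1, hP⟩, rfl⟩⟩, h1⟩

lemma mem_dirClause {C : Clause D} {p : V × α} {b : Bool} :
    (p, b) ∈ (dirClause C).1 ↔ p ∈ C.1 ∧ b = false := by
  simp only [dirClause, Finset.mem_image, Prod.mk.injEq]
  constructor
  · rintro ⟨a, ha, rfl, rfl⟩; exact ⟨ha, rfl⟩
  · rintro ⟨h, rfl⟩; exact ⟨p, h, rfl, rfl⟩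

lemma mem_aloClause {v w : V} {e : α} {b : Bool} :
    ((w, e), b) ∈ (aloClause D v).1 ↔ w = v ∧ e ∈ D v ∧ b = true := by
  simp only [aloClause, Finset.mem_image, Prod.mk.injEq]
  constructor
  · rintro ⟨a, ha, ⟨rfl, rfl⟩, rfl⟩; exact ⟨rfl, ha, rfl⟩
  · rintro ⟨rfl, h, rfl⟩; exact ⟨e, h, ⟨rfl, rfl⟩, rfl⟩

lemma dirClause_inj {C C' : Clause D} (h : dirClause C = dirClause C') : C = C' := by
  apply Subtype.ext
  ext p
  have h1 : (p, false) ∈ (dirClause C).1 ↔ (p, false) ∈ (dirClause C').1 := by rw [h]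
  simpa [mem_dirClause] using h1

lemma dirClause_ne_alo (hD : ∀ v, (D v).Nonempty) (C : Clause D) (v : V) :
    dirClause C ≠ aloClause D v := by
  intro h
  obtain ⟨e, he⟩ := hD v
  have h1 : ((v, e), true) ∈ (dirClause C).1 := by
    rw [h]; exact mem_aloClause.2 ⟨rfl, he, rfl⟩
  simpa using (mem_dirClause.1 h1).2

lemma mem_dirTrans {F : Finset (Clause D)} {B : BClause V α} :
    B ∈ dirTrans F ↔ (∃ C ∈ F, dirClause C = B) ∨ ∃ v ∈ mvars F.val, aloClause D v = B := by
  simp only [dirTrans, Finset.mem_union, Finset.mem_image]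

lemma satB_iff (G : Finset (BClause V α)) :
    Sat G.val ↔ ∃ g : V × α → Bool, ∀ C ∈ G, ∃ l ∈ C.1, g l.1 ≠ l.2 := by
  rw [sat_iff (fun _ => Finset.univ_nonempty)]
  exact ⟨fun ⟨g, _, h⟩ => ⟨g, h⟩, fun ⟨g, h⟩ => ⟨g, fun _ => Finset.mem_univ _, h⟩⟩

lemma sat_mono {G G' : Finset (BClause V α)} (h : G ⊆ G') (hs : Sat G'.val) : Sat G.val := by
  rw [satB_iff] at *
  obtain ⟨g, hg⟩ := hs
  exact ⟨g, fun C hC => hg C (h hC)⟩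

lemma sat_dir (hD : ∀ v, (D v).Nonempty) (F : Finset (Clause D)) :
    Sat F.val ↔ Sat (dirTrans F).val := by
  rw [satB_iff, sat_iff hD]
  constructor
  · rintro ⟨f, hf, h⟩
    refine ⟨fun p => decide (f p.1 ≠ p.2), fun B hB => ?_⟩
    rcases mem_dirTrans.1 hB with ⟨C, hC, rfl⟩ | ⟨v, hv, rfl⟩
    · obtain ⟨l, hl, hne⟩ := h C hC
      exact ⟨(l, false), mem_dirClause.2 ⟨hl, rfl⟩, by simpa using hne⟩
    · exact ⟨((v, f v), true), mem_aloClause.2 ⟨rfl, hf v, rfl⟩, by simp⟩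
  · rintro ⟨g, hg⟩
    have : ∀ v, ∃ e ∈ D v, v ∈ mvars F.val → g (v, e) = false := by
      intro v
      by_cases hv : v ∈ mvars F.val
      · obtain ⟨⟨⟨w, e⟩, b⟩, hl, hne⟩ := hg _ (mem_dirTrans.2 (Or.inr ⟨v, hv, rfl⟩))
        obtain ⟨rfl, he, rfl⟩ := mem_aloClause.1 hl
        exact ⟨e, he, fun _ => by simpa using hne⟩
      · obtain ⟨e, he⟩ := hD v
        exact ⟨e, he, fun h => absurd h hv⟩
    choose f hf hfg using this
    refine ⟨f, hf, fun C hC => ?_⟩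
    obtain ⟨⟨⟨w, e⟩, b⟩, hl, hne⟩ := hg _ (mem_dirTrans.2 (Or.inl ⟨C, hC, rfl⟩))
    obtain ⟨hl2, rfl⟩ := mem_dirClause.1 hl
    refine ⟨(w, e), hl2, fun h => hne ?_⟩
    have h' : f w = e := h
    have := hfg w (mem_mvars'.2 ⟨C, hC, (w, e), hl2, rfl⟩)
    rwa [h'] at this

lemma mu_dir (hD : ∀ v, (D v).Nonempty) (F : Finset (Clause D)) :
    MinUnsat F ↔ MinUnsat (dirTrans F) := by
  unfold MinUnsat
  rw [← sat_dir hD]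
  refine and_congr_right fun hU => ⟨fun h G hG => ?_, fun h F' hF' => ?_⟩
  · obtain ⟨hsub, B, hB, hBG⟩ := Finset.ssubset_iff_subset_ne.1 hG |>.1 |> fun h1 =>
      (⟨h1, Finset.exists_of_ssubset hG⟩ : G ⊆ dirTrans F ∧ ∃ B ∈ dirTrans F, B ∉ G)
    rw [satB_iff]
    rcases mem_dirTrans.1 hB with ⟨C, hC, rfl⟩ | ⟨v, hv, rfl⟩
    · obtain ⟨f, hf, hs⟩ := (sat_iff hD _).1 (h _ (Finset.erase_ssubset hC))
      refine ⟨fun p => decide (f p.1 ≠ p.2), fun B hB => ?_⟩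
      rcases mem_dirTrans.1 (hsub hB) with ⟨C', hC', rfl⟩ | ⟨v, hv, rfl⟩
      · obtain ⟨l, hl, hne⟩ := hs C' (Finset.mem_erase.2 ⟨fun h => hBG (h ▸ hB), hC'⟩)
        exact ⟨(l, false), mem_dirClause.2 ⟨hl, rfl⟩, by simpa using hne⟩
      · exact ⟨((v, f v), true), mem_aloClause.2 ⟨rfl, hf v, rfl⟩, by simp⟩
    · obtain ⟨C, hC, l, hl, rfl⟩ := mem_mvars'.1 hv
      obtain ⟨f, hf, hs⟩ := (sat_iff hD _).1 (h _ (Finset.erase_ssubset hC))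
      refine ⟨fun p => decide (p.1 = l.1 ∨ f p.1 ≠ p.2), fun B hB => ?_⟩
      rcases mem_dirTrans.1 (hsub hB) with ⟨C', hC', rfl⟩ | ⟨w, hw, rfl⟩
      · by_cases hCC : C' = C
        · subst hCC
          exact ⟨(l, false), mem_dirClause.2 ⟨hl, rfl⟩, by simp⟩
        · obtain ⟨l', hl', hne⟩ := hs C' (Finset.mem_erase.2 ⟨hCC, hC'⟩)
          exact ⟨(l', false), mem_dirClause.2 ⟨hl', rfl⟩, by simp [hne]⟩
      · have hne : w ≠ l.1 := fun h => hBG (h ▸ hB)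
        exact ⟨((w, f w), true), mem_aloClause.2 ⟨rfl, hf w, rfl⟩, by simp [hne]⟩
  · rw [sat_dir hD]
    apply h
    obtain ⟨C, hC, hC'⟩ := Finset.exists_of_ssubset hF'
    rw [Finset.ssubset_iff_of_subset]
    · refine ⟨dirClause C, mem_dirTrans.2 (Or.inl ⟨C, hC, rfl⟩), fun hm => ?_⟩
      rcases mem_dirTrans.1 hm with ⟨C'', h1, h2⟩ | ⟨v, _, h2⟩
      · exact hC' (dirClause_inj h2 ▸ h1)
      · exact dirClause_ne_alo hD _ _ h2.symm
    · intro B hB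
      rcases mem_dirTrans.1 hB with ⟨C, h1, rfl⟩ | ⟨v, h1, rfl⟩
      · exact mem_dirTrans.2 (Or.inl ⟨C, hF'.1 h1, rfl⟩)
      · obtain ⟨C, hC, h2⟩ := mem_mvars'.1 h1
        exact mem_dirTrans.2 (Or.inr ⟨v, mem_mvars'.2 ⟨C, hF'.1 hC, h2⟩, rfl⟩)

lemma lean_dir (hD : ∀ v, (D v).Nonempty) (F : Finset (Clause D)) :
    IsLean F.val ↔ IsLean (dirTrans F).val := by
  rw [lean_iff hD, lean_iff (fun _ => Finset.univ_nonempty), not_iff_not]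
  constructor
  · rintro ⟨P, f, hf, hA, C, hC, l, hl, hP⟩
    refine ⟨fun p => P p.1, fun p => decide (f p.1 ≠ p.2), fun _ => Finset.mem_univ _, ?_,
      dirClause C, mem_dirTrans.2 (Or.inl ⟨C, hC, rfl⟩), (l, false),
      mem_dirClause.2 ⟨hl, rfl⟩, hP⟩
    rintro B hB ⟨⟨w, e⟩, b⟩ hl hP
    rcases mem_dirTrans.1 hB with ⟨C, hC, rfl⟩ | ⟨v, hv, rfl⟩
    · obtain ⟨l', hl', hP', hne⟩ := hA C hC _ (mem_dirClause.1 hl).1 hP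
      exact ⟨(l', false), mem_dirClause.2 ⟨hl', rfl⟩, hP', by simpa using hne⟩
    · obtain ⟨rfl, -, -⟩ := mem_aloClause.1 hl
      exact ⟨((w, f w), true), mem_aloClause.2 ⟨rfl, hf w, rfl⟩, hP, by simp⟩
  · rintro ⟨P, g, -, hA, B, hB, ⟨⟨w, e⟩, b⟩, hl, hP⟩
    have halo : ∀ v ∈ mvars F.val, ∀ e ∈ D v, P (v, e) →
        ∃ e ∈ D v, P (v, e) ∧ g (v, e) = false := by
      intro v hv e he hP
      obtain ⟨⟨⟨w, e'⟩, b⟩, hl, hP', hne⟩ := hA _ (mem_dirTrans.2 (Or.inr ⟨v, hv, rfl⟩))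
        ((v, e), true) (mem_aloClause.2 ⟨rfl, he, rfl⟩) hP
      obtain ⟨rfl, he', rfl⟩ := mem_aloClause.1 hl
      exact ⟨e', he', hP', by simpa using hne⟩
    have hch : ∀ v, ∃ e ∈ D v, (∃ e ∈ D v, P (v, e) ∧ g (v, e) = false) →
        P (v, e) ∧ g (v, e) = false := by
      intro v
      by_cases h : ∃ e ∈ D v, P (v, e) ∧ g (v, e) = false
      · obtain ⟨e, he, h2⟩ := h
        exact ⟨e, he, fun _ => h2⟩
      · obtain ⟨e, he⟩ := hD v
        exact ⟨e, he, fun h' => absurd h' h⟩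
    choose f hf hfg using hch
    refine ⟨fun v => ∃ e ∈ D v, P (v, e) ∧ g (v, e) = false, f, hf, ?_, ?_⟩
    · rintro C hC ⟨v, e⟩ hl hQ
      by_cases hfe : f v = e
      · have h1 := hfg v hQ
        rw [hfe] at h1
        obtain ⟨⟨⟨w, e'⟩, b⟩, hl', hP', hne⟩ := hA _ (mem_dirTrans.2 (Or.inl ⟨C, hC, rfl⟩))
          ((v, e), false) (mem_dirClause.2 ⟨hl, rfl⟩) h1.1
        obtain ⟨hl2, rfl⟩ := mem_dirClause.1 hl'
        have hQ' := halo w (mem_mvars'.2 ⟨C, hC, (w, e'), hl2, rfl⟩) e' (C.2.1 (w, e') hl2) hP'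
        refine ⟨(w, e'), hl2, hQ', fun h => hne ?_⟩
        have h' : f w = e' := h
        have := (hfg w hQ').2
        rwa [h'] at this
      · exact ⟨(v, e), hl, hQ, hfe⟩
    · have : w ∈ mvars F.val ∧ e ∈ D w := by
        rcases mem_dirTrans.1 hB with ⟨C, hC, rfl⟩ | ⟨v, hv, rfl⟩
        · have hl' := (mem_dirClause.1 hl).1
          exact ⟨mem_mvars'.2 ⟨C, hC, _, hl', rfl⟩, C.2.1 _ hl'⟩
        · obtain ⟨rfl, he, -⟩ := mem_aloClause.1 hl
          exact ⟨hv, he⟩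
      obtain ⟨C, hC, l, hl2, rfl⟩ := mem_mvars'.1 this.1
      exact ⟨C, hC, l, hl2, halo _ this.1 e this.2 hP⟩

/-- the direct translation `Γ` preserves satisfiability, minimal
unsatisfiability, and leanness. -/
theorem dirTrans_preserves
    (hD : ∀ v, (D v).Nonempty) (F : Finset (Clause D)) :
    (Sat F.val ↔ Sat (dirTrans F).val) ∧
    (MinUnsat F ↔ MinUnsat (dirTrans F)) ∧
    (IsLean F.val ↔ IsLean (dirTrans F).val) := by
  exact ⟨sat_dir hD F, mu_dir hD F, lean_dir hD F⟩

end GCLS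
end

section
/- (Generalised Graham–Pollak bound) For every generalised multi-clause-set F one has δ(F) ≤ hdef(F), i.e., the deficiency of F is at most its hermitian defect. -/
set_option linter.unusedSectionVars false
set_option linter.unusedVariables false

open scoped Classical

namespace GCLS

variable {V α : Type} [DecidableEq V] [DecidableEq α]

variable {D : V → Finset α}

lemma card_le_of_isotropic {m : ℕ} {ι : Type} [Fintype ι]
    (M : Matrix (Fin m) (Fin m) ℝ) (herm : M.IsHermitian)
    (T : (Fin m → ℝ) →ₗ[ℝ] (ι → ℝ))
    (hT : ∀ x, T x = 0 → x ⬝ᵥ (M.mulVec x) = 0)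
    (σ : ℝ) (S : Finset (Fin m)) (hS : ∀ i ∈ S, 0 < σ * herm.eigenvalues i) :
    S.card ≤ Fintype.card ι := by
  by_contra hlt
  push Not at hlt
  let ext : (S → ℝ) →ₗ[ℝ] (Fin m → ℝ) :=
    { toFun := fun c i => if h : i ∈ S then c ⟨i, h⟩ else 0
      map_add' := by intro a b; funext i; by_cases h : i ∈ S <;> simp [h]
      map_smul' := by intro a b; funext i; by_cases h : i ∈ S <;> simp [h] }
  let U : Matrix (Fin m) (Fin m) ℝ := (herm.eigenvectorUnitary : Matrix (Fin m) (Fin m) ℝ)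
  have hU : U.transpose * M * U = Matrix.diagonal herm.eigenvalues := by
    have := herm.conjStarAlgAut_star_eigenvectorUnitary
    rw [Unitary.conjStarAlgAut_apply] at this
    simpa [U, Matrix.star_eq_conjTranspose, Function.comp_def] using this
  have hker : LinearMap.ker (T ∘ₗ U.mulVecLin ∘ₗ ext) ≠ ⊥ := by
    apply LinearMap.ker_ne_bot_of_finrank_lt
    simpa using hlt
  obtain ⟨c, hc, hc0⟩ := Submodule.exists_mem_ne_zero_of_ne_bot hker
  have h0 := hT (U.mulVec (ext c)) (by simpa using hc)
  have h1 : (U.mulVec (ext c)) ⬝ᵥ (M.mulVec (U.mulVec (ext c)))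
      = ∑ i, herm.eigenvalues i * (ext c i) ^ 2 := by
    have e : (U.mulVec (ext c)) = Matrix.vecMul (ext c) U.transpose := by
      rw [Matrix.vecMul_transpose]
    nth_rewrite 1 [e]
    rw [← Matrix.dotProduct_mulVec, Matrix.mulVec_mulVec, Matrix.mulVec_mulVec, hU]
    simp only [dotProduct, Matrix.mulVec_diagonal]
    exact Finset.sum_congr rfl fun i _ => by ring
  rw [h1] at h0
  have h2 : ∑ i, (σ * herm.eigenvalues i) * (ext c i) ^ 2 = 0 := by
    simp only [mul_assoc]
    rw [← Finset.mul_sum, h0, mul_zero]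
  have hnn : ∀ i ∈ Finset.univ, 0 ≤ (σ * herm.eigenvalues i) * (ext c i) ^ 2 := by
    intro i _
    by_cases h : i ∈ S
    · have := hS i h
      positivity
    · simp [ext, h]
  rw [Finset.sum_eq_zero_iff_of_nonneg hnn] at h2
  apply hc0
  funext ⟨i, hi⟩
  have h3 := h2 i (Finset.mem_univ _)
  have h4 := (hS i hi).ne'
  rcases mul_eq_zero.mp h3 with h | h
  · exact absurd h h4
  · have := pow_eq_zero_iff (two_ne_zero) |>.mp h
    simpa [ext, hi] using this

/-- indicator of a literal in a clause -/
noncomputable def ind (C : Clause D) (v : V) (ε : α) : ℝ := if (v, ε) ∈ C.1 then 1 else 0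

lemma sum_ind_mul (C : Clause D) (v : V) (ε : α) (h : (v, ε) ∈ C.1) (f : α → ℝ) :
    ∑ e ∈ D v, ind C v e * f e = f ε := by
  have hε : ε ∈ D v := C.2.1 _ h
  rw [Finset.sum_eq_single_of_mem ε hε]
  · simp [ind, h]
  · intro b _ hb
    have : (v, b) ∉ C.1 := fun h' => hb (congrArg Prod.snd (C.2.2 _ h' _ h rfl))
    simp [ind, this]

lemma clash_ind (C C' : Clause D) (v : V) :
    (if (∃ ε ε', (v, ε) ∈ C.1 ∧ (v, ε') ∈ C'.1 ∧ ε ≠ ε') then (1 : ℝ) else 0) =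
      (∑ e ∈ D v, ind C v e) * (∑ e ∈ D v, ind C' v e) - ∑ e ∈ D v, ind C v e * ind C' v e := by
  by_cases h : ∃ ε, (v, ε) ∈ C.1
  · obtain ⟨ε, hε⟩ := h
    have h1 := sum_ind_mul C v ε hε (fun _ => 1)
    simp only [mul_one] at h1
    rw [h1, sum_ind_mul C v ε hε]
    by_cases h' : ∃ ε', (v, ε') ∈ C'.1
    · obtain ⟨ε', hε'⟩ := h'
      have h2 := sum_ind_mul C' v ε' hε' (fun _ => 1)
      simp only [mul_one] at h2
      rw [h2]
      have u1 : ∀ e, (v, e) ∈ C.1 → e = ε :=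
        fun e he => congrArg Prod.snd (C.2.2 _ he _ hε rfl)
      have u2 : ∀ e, (v, e) ∈ C'.1 → e = ε' :=
        fun e he => congrArg Prod.snd (C'.2.2 _ he _ hε' rfl)
      by_cases hh : ε = ε'
      · subst hh
        rw [if_neg]
        · simp [ind, hε']
        · rintro ⟨a, b, ha, hb, hab⟩
          exact hab ((u1 a ha).trans (u2 b hb).symm)
      · rw [if_pos ⟨ε, ε', hε, hε', hh⟩]
        have : (v, ε) ∉ C'.1 := fun h => hh (u2 _ h)
        simp [ind, this]
    · rw [if_neg (by rintro ⟨a, b, ha, hb, hab⟩; exact h' ⟨b, hb⟩)]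
      push Not at h'
      simp [ind, h']
  · rw [if_neg (by rintro ⟨a, b, ha, hb, hab⟩; exact h ⟨a, ha⟩)]
    push Not at h
    simp [ind, h]

lemma clashCount_eq (W : Finset V) (C C' : Clause D) (hC : FinFn.vars C ⊆ W) :
    (clashCount C C' : ℝ) = ∑ v ∈ W, ((∑ e ∈ D v, ind C v e) * (∑ e ∈ D v, ind C' v e)
      - ∑ e ∈ D v, ind C v e * ind C' v e) := by
  simp only [← clash_ind]
  rw [Finset.sum_boole]
  unfold clashCount
  congr 2
  ext v
  simp only [Finset.mem_filter]
  constructor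
  · rintro ⟨a, b⟩; exact ⟨hC a, b⟩
  · rintro ⟨a, b⟩
    refine ⟨?_, b⟩
    obtain ⟨ε, ε', h, -⟩ := b
    exact Finset.mem_image.mpr ⟨_, h, rfl⟩

lemma quad_eq {m : ℕ} (W : Finset V) (c : Fin m → Clause D) (hc : ∀ i, FinFn.vars (c i) ⊆ W)
    (M : Matrix (Fin m) (Fin m) ℝ) (hM : ∀ i j, M i j = clashCount (c i) (c j))
    (x : Fin m → ℝ) :
    x ⬝ᵥ M.mulVec x = ∑ v ∈ W, ((∑ e ∈ D v, ∑ i, ind (c i) v e * x i) ^ 2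
      - ∑ e ∈ D v, (∑ i, ind (c i) v e * x i) ^ 2) := by
  have h1 : x ⬝ᵥ M.mulVec x = ∑ i, ∑ j, ∑ v ∈ W,
      ((∑ e ∈ D v, ind (c i) v e * x i) * (∑ e ∈ D v, ind (c j) v e * x j)
      - ∑ e ∈ D v, (ind (c i) v e * x i) * (ind (c j) v e * x j)) := by
    simp only [dotProduct, Matrix.mulVec]
    simp only [Finset.mul_sum (s := (Finset.univ : Finset (Fin m)))]
    refine Finset.sum_congr rfl fun i _ => Finset.sum_congr rfl fun j _ => ?_
    rw [hM, clashCount_eq W _ _ (hc i), Finset.sum_mul (s := W), Finset.mul_sum (s := W)]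
    refine Finset.sum_congr rfl fun v _ => ?_
    rw [← Finset.sum_mul, ← Finset.sum_mul]
    have : ∑ e ∈ D v, (ind (c i) v e * x i) * (ind (c j) v e * x j)
        = (∑ e ∈ D v, ind (c i) v e * ind (c j) v e) * (x i * x j) := by
      rw [Finset.sum_mul]
      exact Finset.sum_congr rfl fun e _ => by ring
    rw [this]
    ring
  rw [h1]
  have h2 : ∀ i, ∑ j, ∑ v ∈ W,
      ((∑ e ∈ D v, ind (c i) v e * x i) * (∑ e ∈ D v, ind (c j) v e * x j)
      - ∑ e ∈ D v, (ind (c i) v e * x i) * (ind (c j) v e * x j)) = ∑ v ∈ W, ∑ j,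
      ((∑ e ∈ D v, ind (c i) v e * x i) * (∑ e ∈ D v, ind (c j) v e * x j)
      - ∑ e ∈ D v, (ind (c i) v e * x i) * (ind (c j) v e * x j)) := fun i => Finset.sum_comm
  simp only [h2]
  rw [Finset.sum_comm]
  refine Finset.sum_congr rfl fun v _ => ?_
  simp only [Finset.sum_sub_distrib]
  congr 1
  · rw [sq, Finset.sum_comm (s := D v), Finset.sum_mul_sum]
  · simp only [sq, Finset.sum_mul_sum]
    rw [Finset.sum_comm (s := D v)]
    exact Finset.sum_congr rfl fun i _ => Finset.sum_comm

lemma mem_mvars {F : Multiset (Clause D)} {C : Clause D} (h : C ∈ F) :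
    FinFn.vars C ⊆ mvars F :=
  Finset.le_sup (f := FinFn.vars) (Multiset.mem_toFinset.mpr h)

lemma clashCount_self (C : Clause D) : clashCount C C = 0 := by
  unfold clashCount
  rw [Finset.card_eq_zero, Finset.filter_eq_empty_iff]
  rintro v - ⟨a, b, ha, hb, hab⟩
  exact hab (congrArg Prod.snd (C.2.2 _ ha _ hb rfl))

/-- generalised Graham–Pollak bound: `δ(F) ≤ hdef(F)`, where the
hermitian defect is `c(F)` minus the maximum of the numbers of positive and of
negative eigenvalues of the conflict matrix of `F` (with respect to any
enumeration `L` of the clause-occurrences). -/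
theorem deficiency_le_hermitian_defect
    (hD : ∀ v, (D v).Nonempty) (F : Multiset (Clause D))
    (L : List (Clause D)) (hL : (↑L : Multiset (Clause D)) = F)
    (M : Matrix (Fin L.length) (Fin L.length) ℝ)
    (hM : ∀ i j, M i j =
      if i = j then 0 else (clashCount (L.get i) (L.get j) : ℝ))
    (herm : M.IsHermitian) :
    delta F ≤ (L.length : ℤ) -
      max ((Finset.univ.filter (fun i => 0 < herm.eigenvalues i)).card : ℤ)
          ((Finset.univ.filter (fun i => herm.eigenvalues i < 0)).card : ℤ) := by
  choose e0 he0 using hD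
  let W := mvars F
  let I : Finset (Σ _ : V, α) := W.sigma (fun v => (D v).erase (e0 v))
  have hI : ((Fintype.card I : ℕ) : ℤ) = ∑ v ∈ mvars F, ((D v).card - 1 : ℤ) := by
    rw [Fintype.card_coe, Finset.card_sigma]
    push_cast
    refine Finset.sum_congr rfl fun v _ => ?_
    have hp : 0 < (D v).card := Finset.card_pos.mpr ⟨_, he0 v⟩
    rw [Finset.card_erase_of_mem (he0 v)]
    omega
  have hM' : ∀ i j, M i j = clashCount (L.get i) (L.get j) := by
    intro i j
    rw [hM]
    split_ifs with h
    · subst h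
      rw [clashCount_self]; simp
    · rfl
  have hsub : ∀ i, FinFn.vars (L.get i) ⊆ W := fun i =>
    mem_mvars (by rw [← hL]; exact Multiset.mem_coe.mpr (List.get_mem L i))
  let T : (Fin L.length → ℝ) →ₗ[ℝ] (I → ℝ) :=
    Matrix.mulVecLin (fun (p : I) i => ind (L.get i) p.1.1 p.1.2)
  have hT : ∀ x, T x = 0 → x ⬝ᵥ (M.mulVec x) = 0 := by
    intro x hx
    rw [quad_eq W L.get hsub M hM' x]
    refine Finset.sum_eq_zero fun v hv => ?_
    have key : ∀ e ∈ D v, e ≠ e0 v → ∑ i, ind (L.get i) v e * x i = 0 := by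
      intro e he hne
      have hmem : (⟨v, e⟩ : Σ _ : V, α) ∈ I :=
        Finset.mem_sigma.mpr ⟨hv, Finset.mem_erase.mpr ⟨hne, he⟩⟩
      exact congrFun hx ⟨_, hmem⟩
    rw [Finset.sum_eq_single_of_mem (e0 v) (he0 v) key,
      Finset.sum_eq_single_of_mem (e0 v) (he0 v) (fun e he hne => by rw [key e he hne]; simp)]
    ring
  have hpos := card_le_of_isotropic M herm T hT 1
    (Finset.univ.filter (fun i => 0 < herm.eigenvalues i)) (by simp)
  have hneg := card_le_of_isotropic M herm T hT (-1)
    (Finset.univ.filter (fun i => herm.eigenvalues i < 0)) (by simp)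
  have hcard : Multiset.card F = L.length := by rw [← hL]; rfl
  unfold delta
  rw [← hI, hcard]
  have := max_le (Int.ofNat_le.mpr hpos) (Int.ofNat_le.mpr hneg)
  have h3 : max ((Finset.univ.filter (fun i => 0 < herm.eigenvalues i)).card : ℤ)
          ((Finset.univ.filter (fun i => herm.eigenvalues i < 0)).card : ℤ)
          ≤ (Fintype.card I : ℤ) := this
  linarith

end GCLS
end
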